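/- For all 1 ≤ l < k ≤ n and every x ∈ U ∩ S^n, the Lie bracket of the vector fields e_k and e_l satisfies [e_k, e_l](x) = (x_{l−1} / √(s_{l−1}(x) s_l(x))) · e_k(x). -/

import Mathlib

open scoped InnerProductSpace BigOperators

noncomputable section

/-- `s_j(x) = ∑_{r=j}^n x_r²`. -/
def sfun (n j : ℕ) (x : EuclideanSpace ℝ (Fin (n + 1))) : ℝ :=
  ∑ r : Fin (n + 1), if j ≤ (r : ℕ) then x r ^ 2 else 0

/-- The `j`-th coordinate of `x` (read as a natural-number index, `0` out of range). -/
def coordfun (n : ℕ) (x : EuclideanSpace ℝ (Fin (n + 1))) (j : ℕ) : ℝ :=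
  if h : j < n + 1 then x ⟨j, h⟩ else 0

/-- The vector field `e_j(x) = √(s_j/s_{j-1}) ( −∂_{j−1} + (x_{j−1}/s_j) Σ_{r=j}^n x_r ∂_r )`. -/
def efun (n j : ℕ) (x : EuclideanSpace ℝ (Fin (n + 1))) : EuclideanSpace ℝ (Fin (n + 1)) :=
  WithLp.toLp 2 fun r => Real.sqrt (sfun n j x / sfun n (j - 1) x) *
    (-(if (r : ℕ) = j - 1 then 1 else 0)
      + coordfun n x (j - 1) / sfun n j x * (if j ≤ (r : ℕ) then x r else 0))

/-- `U = {x ∈ ℝ^{n+1} : x_n > 0}`. -/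
def Usph (n : ℕ) : Set (EuclideanSpace ℝ (Fin (n + 1))) := {x | 0 < coordfun n x n}

/-- The unit sphere `S^n ⊂ ℝ^{n+1}`. -/
def sph (n : ℕ) : Set (EuclideanSpace ℝ (Fin (n + 1))) :=
  {x | ∑ r : Fin (n + 1), x r ^ 2 = 1}

/-- `s_j` is positive on `U` for `j ≤ n`. -/
lemma sfun_pos {n j : ℕ} (hj : j ≤ n) {x : EuclideanSpace ℝ (Fin (n + 1))}
    (hx : x ∈ Usph n) : 0 < sfun n j x := by
  have hxn : 0 < x ⟨n, n.lt_succ_self⟩ := by simpa [Usph, coordfun] using hx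
  refine Finset.sum_pos' (fun r _ => by split_ifs <;> positivity)
    ⟨⟨n, n.lt_succ_self⟩, Finset.mem_univ _, ?_⟩
  rw [if_pos hj]
  positivity

lemma differentiable_sfun (n j : ℕ) : Differentiable ℝ (sfun n j) := by
  unfold sfun
  refine Differentiable.fun_sum fun r _ => ?_
  split_ifs <;> fun_prop

lemma differentiable_coordfun (n j : ℕ) : Differentiable ℝ fun x => coordfun n x j := by
  unfold coordfun
  split_ifs <;> fun_prop

lemma differentiableAt_efun {n j : ℕ} (hj : j ≤ n) {x : EuclideanSpace ℝ (Fin (n + 1))}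
    (hx : x ∈ Usph n) : DifferentiableAt ℝ (efun n j) x := by
  have hs := sfun_pos hj hx
  have hs' := sfun_pos ((j.sub_le 1).trans hj) hx
  have hds := (differentiable_sfun n j) x
  have hds' := (differentiable_sfun n (j - 1)) x
  have hdc := (differentiable_coordfun n (j - 1)) x
  rw [differentiableAt_euclidean]
  intro r
  simp only [efun, div_eq_mul_inv]
  refine ((hds.fun_mul (hds'.fun_inv hs'.ne')).sqrt (mul_pos hs (inv_pos.2 hs')).ne').mul
    ((differentiableAt_const _).add ((hdc.fun_mul (hds.fun_inv hs.ne')).mul ?_))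
  split_ifs <;> fun_prop

/-- The derivative of `s_j` along the line `x + t v`. -/
lemma hasLineDerivAt_sfun (n j : ℕ) (x v : EuclideanSpace ℝ (Fin (n + 1))) :
    HasLineDerivAt ℝ (sfun n j)
      (∑ r : Fin (n + 1), if j ≤ (r : ℕ) then 2 * x r * v r else 0) x v := by
  unfold HasLineDerivAt sfun
  refine HasDerivAt.fun_sum fun r _ => ?_
  split_ifs
  · have h : HasDerivAt (fun t : ℝ => x r + t * v r) (v r) 0 := by
      simpa using ((hasDerivAt_id (0 : ℝ)).mul_const (v r)).const_add (x r)
    simpa using h.fun_pow 2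
  · exact hasDerivAt_const _ _

lemma efun_apply_eq_zero {n k : ℕ} (x : EuclideanSpace ℝ (Fin (n + 1))) {r : Fin (n + 1)}
    (hr : (r : ℕ) < k - 1) : efun n k x r = 0 := by
  simp [efun, hr.ne, show ¬ k ≤ (r : ℕ) by omega]

/-- `e_k` annihilates `s_j` for `j < k`. -/
lemma hasLineDerivAt_sfun_efun {n j k : ℕ} (hjk : j < k) (hk : k ≤ n)
    {x : EuclideanSpace ℝ (Fin (n + 1))} (hx : x ∈ Usph n) :
    HasLineDerivAt ℝ (sfun n j) 0 x (efun n k x) := by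
  have hs := sfun_pos hk hx
  convert hasLineDerivAt_sfun n j x (efun n k x) using 1
  set A := Real.sqrt (sfun n k x / sfun n (k - 1) x) with hA
  set c := coordfun n x (k - 1) with hc
  have hterm : ∀ r : Fin (n + 1), (if j ≤ (r : ℕ) then 2 * x r * efun n k x r else 0)
      = 2 * A * (-(if r = ⟨k - 1, by omega⟩ then x r else 0)
        + c / sfun n k x * (if k ≤ (r : ℕ) then x r ^ 2 else 0)) := by
    intro r
    simp only [efun, Fin.ext_iff, ← hA, ← hc]
    split_ifs <;> first | omega | ring
  rw [Finset.sum_congr rfl fun r _ => hterm r, ← Finset.mul_sum, Finset.sum_add_distrib,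
    Finset.sum_neg_distrib, ← Finset.mul_sum, Finset.sum_ite_eq' Finset.univ,
    if_pos (Finset.mem_univ _)]
  change 0 = 2 * A * (-x ⟨k - 1, _⟩ + c / sfun n k x * sfun n k x)
  rw [div_mul_cancel₀ _ hs.ne', hc, coordfun, dif_pos (by omega)]
  ring

/-- `e_k` depends only on the coordinates of index at least `k - 1`, and it is homogeneous of
degree `0` in them. -/
lemma efun_eq_of_scale {n k : ℕ} (hk : k ≤ n) {x y : EuclideanSpace ℝ (Fin (n + 1))} {a : ℝ}
    (ha : 0 < a) (hy : ∀ r : Fin (n + 1), k - 1 ≤ (r : ℕ) → y r = a * x r) :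
    efun n k y = efun n k x := by
  have hs : ∀ j, k - 1 ≤ j → sfun n j y = a ^ 2 * sfun n j x := by
    intro j hj
    simp only [sfun, Finset.mul_sum]
    refine Finset.sum_congr rfl fun r _ => ?_
    split_ifs with h
    · rw [hy r (hj.trans h)]; ring
    · simp
  have hc : coordfun n y (k - 1) = a * coordfun n x (k - 1) := by
    have h : k - 1 < n + 1 := by omega
    simp only [coordfun, dif_pos h]
    exact hy _ le_rfl
  ext r
  simp only [efun, hs k k.pred_le, hs (k - 1) le_rfl, hc]
  rw [mul_div_mul_left _ _ (by positivity : a ^ 2 ≠ 0)]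
  congr 2
  split_ifs with h
  · rw [hy r (by omega)]
    field_simp
  · simp

/-- The derivative of `e_k` along `e_l` vanishes for `l < k`. -/
lemma fderiv_efun_efun_eq_zero {n l k : ℕ} (hl : 1 ≤ l) (hlk : l < k) (hk : k ≤ n)
    {x : EuclideanSpace ℝ (Fin (n + 1))} (hx : x ∈ Usph n) :
    fderiv ℝ (efun n k) x (efun n l x) = 0 := by
  rw [← (differentiableAt_efun hk hx).lineDeriv_eq_fderiv]
  refine HasLineDerivAt.lineDeriv ?_
  set c := Real.sqrt (sfun n l x / sfun n (l - 1) x) * (coordfun n x (l - 1) / sfun n l x) with hc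
  have hpos : ∀ᶠ t : ℝ in nhds 0, 0 < 1 + t * c :=
    (by fun_prop : Continuous fun t : ℝ => 1 + t * c).continuousAt.eventually
      (lt_mem_nhds (by simp))
  refine (hasDerivAt_const (0 : ℝ) (efun n k x)).congr_of_eventuallyEq ?_
  filter_upwards [hpos] with t ht
  refine efun_eq_of_scale hk ht fun r hr => ?_
  simp only [efun, PiLp.add_apply, PiLp.smul_apply, smul_eq_mul,
    if_pos (show l ≤ (r : ℕ) by omega), if_neg (show (r : ℕ) ≠ l - 1 by omega)]
  rw [hc]
  ring

/-- The derivative of `e_l` along `e_k` is a multiple of `e_k` for `l < k`. -/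
lemma fderiv_efun_efun_eq_smul {n l k : ℕ} (hl : 1 ≤ l) (hlk : l < k) (hk : k ≤ n)
    {x : EuclideanSpace ℝ (Fin (n + 1))} (hx : x ∈ Usph n) :
    fderiv ℝ (efun n l) x (efun n k x)
      = (Real.sqrt (sfun n l x / sfun n (l - 1) x) * (coordfun n x (l - 1) / sfun n l x)) •
        efun n k x := by
  have hln : l ≤ n := by omega
  have hs := sfun_pos hln hx
  have hs' := sfun_pos ((l.sub_le 1).trans hln) hx
  have hd := differentiableAt_efun hln hx
  rw [← hd.lineDeriv_eq_fderiv]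
  refine HasLineDerivAt.lineDeriv ?_
  set v := efun n k x with hv
  have hS : HasDerivAt (fun t : ℝ => sfun n l (x + t • v)) 0 0 :=
    hasLineDerivAt_sfun_efun hlk hk hx
  have hS' : HasDerivAt (fun t : ℝ => sfun n (l - 1) (x + t • v)) 0 0 :=
    hasLineDerivAt_sfun_efun (l.pred_le.trans_lt hlk) hk hx
  have hC : ∀ t : ℝ, coordfun n (x + t • v) (l - 1) = coordfun n x (l - 1) := by
    intro t
    have h : l - 1 < n + 1 := by omega
    simp only [coordfun, dif_pos h, PiLp.add_apply, PiLp.smul_apply, hv]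
    rw [efun_apply_eq_zero x (by simp only; omega)]
    simp
  unfold HasLineDerivAt
  rw [hasDerivAt_iff_hasFDerivAt, ← hasFDerivWithinAt_univ, hasFDerivWithinAt_euclidean]
  intro r
  rw [hasFDerivWithinAt_univ]
  have hX : HasDerivAt (fun t : ℝ => if l ≤ (r : ℕ) then (x + t • v) r else 0) (v r) 0 := by
    split_ifs with h
    · simpa using ((hasDerivAt_id (0 : ℝ)).mul_const (v r)).const_add (x r)
    · rw [hv, efun_apply_eq_zero x (by omega)]
      exact hasDerivAt_const _ _
  have h0 : x + (0 : ℝ) • v = x := by simp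
  have key := ((hS.fun_div hS' (by rw [h0]; exact hs'.ne')).sqrt
    (by rw [h0]; exact (div_pos hs hs').ne')).fun_mul
    ((((hasDerivAt_const (0 : ℝ) (coordfun n x (l - 1))).fun_div hS
      (by rw [h0]; exact hs.ne')).fun_mul hX).const_add (-(if (r : ℕ) = l - 1 then 1 else 0)))
  simp only [efun, hC]
  refine key.hasFDerivAt.congr_fderiv ?_
  ext
  simp [mul_assoc]

/-- For `1 ≤ l < k ≤ n` and `x ∈ U ∩ S^n`, the Lie bracket
`[e_k, e_l](x) = D_{e_k(x)} e_l(x) − D_{e_l(x)} e_k(x)` equals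
`(x_{l−1} / √(s_{l−1}(x) s_l(x))) · e_k(x)`. -/
theorem statement6 (n l k : ℕ) (hl : 1 ≤ l) (hlk : l < k) (hk : k ≤ n)
    (x : EuclideanSpace ℝ (Fin (n + 1))) (hxU : x ∈ Usph n) (hxS : x ∈ sph n) :
    fderiv ℝ (efun n l) x (efun n k x) - fderiv ℝ (efun n k) x (efun n l x)
      = (coordfun n x (l - 1) / Real.sqrt (sfun n (l - 1) x * sfun n l x)) • efun n k x := by
  have hs := sfun_pos (hlk.le.trans hk) hxU
  have hs' := sfun_pos ((l.sub_le 1).trans (hlk.le.trans hk)) hxU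
  rw [fderiv_efun_efun_eq_zero hl hlk hk hxU, sub_zero, fderiv_efun_efun_eq_smul hl hlk hk hxU,
    Real.sqrt_div hs.le, Real.sqrt_mul hs'.le]
  congr 1
  have h := Real.sqrt_pos.2 hs
  have h' := Real.sqrt_pos.2 hs'
  field_simp
  rw [Real.sq_sqrt hs.le, mul_comm]
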